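/- Consider a chores instance on a simple graph G = (N, M), and let G' = (N, M') be the graph obtained from G by deleting every edge that is a dummy for at least one of its two endpoint agents (so in the restricted chores instance on G', obtained by restricting each valuation v_i to subsets of M', every remaining edge is a chore for both of its endpoints). Then G has an EFX_- orientation if and only if G' has an EFX_- orientation. -/

import Mathlib

open Finset

variable {V : Type*} [DecidableEq V]

/-- `e` has strictly positive marginal value (is a *good*) for the valuation `v`
relative to the item set `M`. -/
def IsGoodFor (v : Finset (Sym2 V) → ℝ) (M : Finset (Sym2 V)) (e : Sym2 V) : Prop :=
  ∀ S ⊆ M.erase e, v S < v (insert e S)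

/-- `e` has strictly negative marginal value (is a *chore*) for the valuation `v`
relative to the item set `M`. -/
def IsChoreFor (v : Finset (Sym2 V) → ℝ) (M : Finset (Sym2 V)) (e : Sym2 V) : Prop :=
  ∀ S ⊆ M.erase e, v (insert e S) < v S

/-- `e` has zero marginal value (is a *dummy*) for the valuation `v`
relative to the item set `M`. -/
def IsDummyFor (v : Finset (Sym2 V) → ℝ) (M : Finset (Sym2 V)) (e : Sym2 V) : Prop :=
  ∀ S ⊆ M.erase e, v (insert e S) = v S

/-- A valid instance on a simple graph: the edge set `M` consists of non-loop edges,
every edge is (for every agent) a good, a chore, or a dummy, and every edge not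
incident to an agent is a dummy for that agent. -/
def ValidInstance (M : Finset (Sym2 V)) (v : V → Finset (Sym2 V) → ℝ) : Prop :=
  (∀ e ∈ M, ¬ e.IsDiag) ∧
  (∀ (i : V), ∀ e ∈ M, IsGoodFor (v i) M e ∨ IsChoreFor (v i) M e ∨ IsDummyFor (v i) M e) ∧
  (∀ (i : V), ∀ e ∈ M, i ∉ e → IsDummyFor (v i) M e)

/-- `X` is a (complete) allocation of the items in `M`: bundles are contained in `M`
and every item belongs to exactly one bundle. -/
def IsAllocation (M : Finset (Sym2 V)) (X : V → Finset (Sym2 V)) : Prop :=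
  (∀ i, X i ⊆ M) ∧ ∀ e ∈ M, ∃! i, e ∈ X i

/-- Every allocated edge goes to one of its endpoint agents. -/
def IsOrientation (X : V → Finset (Sym2 V)) : Prop :=
  ∀ i, ∀ e ∈ X i, i ∈ e

/-- Agent `i` envies agent `j`. -/
def Envies (v : V → Finset (Sym2 V) → ℝ) (X : V → Finset (Sym2 V)) (i j : V) : Prop :=
  v i (X i) < v i (X j)

/-- EFX condition on the envied bundle, removing an item whose removal *strictly*
decreases the value (superscript `+`). -/
def CondEnviedStrict (v : V → Finset (Sym2 V) → ℝ) (X : V → Finset (Sym2 V)) : Prop :=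
  ∀ i j, Envies v X i j → ∀ e ∈ X j,
    v i ((X j).erase e) < v i (X j) → v i ((X j).erase e) ≤ v i (X i)

/-- EFX condition on the envied bundle, removing an item whose removal weakly
decreases the value (superscript `0`). -/
def CondEnviedWeak (v : V → Finset (Sym2 V) → ℝ) (X : V → Finset (Sym2 V)) : Prop :=
  ∀ i j, Envies v X i j → ∀ e ∈ X j,
    v i ((X j).erase e) ≤ v i (X j) → v i ((X j).erase e) ≤ v i (X i)

/-- EFX condition on the envious agent's own bundle, removing an item whose removal
*strictly* increases the value (subscript `-`). -/
def CondOwnStrict (v : V → Finset (Sym2 V) → ℝ) (X : V → Finset (Sym2 V)) : Prop :=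
  ∀ i j, Envies v X i j → ∀ e ∈ X i,
    v i (X i) < v i ((X i).erase e) → v i (X j) ≤ v i ((X i).erase e)

/-- EFX condition on the envious agent's own bundle, removing an item whose removal
weakly increases the value (subscript `0`). -/
def CondOwnWeak (v : V → Finset (Sym2 V) → ℝ) (X : V → Finset (Sym2 V)) : Prop :=
  ∀ i j, Envies v X i j → ∀ e ∈ X i,
    v i (X i) ≤ v i ((X i).erase e) → v i (X j) ≤ v i ((X i).erase e)

theorem aux_mono {V : Type*} [DecidableEq V] (M : Finset (Sym2 V)) (w : Finset (Sym2 V) → ℝ)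
    (h : ∀ e ∈ M, IsChoreFor w M e ∨ IsDummyFor w M e) (S T : Finset (Sym2 V))
    (hST : S ⊆ T) (hT : T ⊆ M) : w T ≤ w S := by
  induction T using Finset.induction_on generalizing S with
  | empty => rw [Finset.subset_empty.mp hST]
  | insert e T he ih =>
    have heM : e ∈ M := hT (Finset.mem_insert_self e T)
    have hTM : T ⊆ M := fun x hx => hT (Finset.mem_insert_of_mem hx)
    have step : ∀ U : Finset (Sym2 V), U ⊆ M → e ∉ U → w (insert e U) ≤ w U := by
      intro U hU heU
      have hU' : U ⊆ M.erase e := Finset.subset_erase.mpr ⟨hU, heU⟩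
      rcases h e heM with h | h
      · exact (h U hU').le
      · exact (h U hU').le
    have stepT := step T hTM he
    by_cases heS : e ∈ S
    · -- remove `e` from both sides, by comparing along `S`
      have key : ∀ R : Finset (Sym2 V), R ⊆ M → Disjoint R S → w (S ∪ R) ≤ w S := by
        intro R
        induction R using Finset.induction_on with
        | empty => intro _ _; simp
        | insert f R hf ihR =>
          intro hR hd
          rw [Finset.disjoint_insert_left] at hd
          have h1 := ihR (fun x hx => hR (Finset.mem_insert_of_mem hx)) hd.2
          have hsub : S ∪ R ⊆ M.erase f := by
            intro x hx
            rw [Finset.mem_erase]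
            rcases Finset.mem_union.mp hx with hx | hx
            · exact ⟨fun hh => hd.1 (hh ▸ hx), hT (hST hx)⟩
            · exact ⟨fun hh => hf (hh ▸ hx), hR (Finset.mem_insert_of_mem hx)⟩
          rw [Finset.union_insert]
          rcases h f (hR (Finset.mem_insert_self f R)) with h | h
          · exact (h _ hsub).le.trans h1
          · exact (h _ hsub).le.trans h1
      have := key (insert e T \ S) (Finset.sdiff_subset.trans hT) Finset.sdiff_disjoint
      rwa [Finset.union_sdiff_of_subset hST] at this
    · exact stepT.trans (ih S (by
        intro x hx
        rcases Finset.mem_insert.mp (hST hx) with rfl | h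
        · exact absurd hx heS
        · exact h) hTM)

theorem aux_dummy {V : Type*} [DecidableEq V] (M : Finset (Sym2 V)) (w : Finset (Sym2 V) → ℝ)
    (S R : Finset (Sym2 V)) (hS : S ⊆ M) (hR : R ⊆ M)
    (h : ∀ e ∈ R, IsDummyFor w M e) : w (S ∪ R) = w S := by
  induction R using Finset.induction_on with
  | empty => simp
  | insert f R hf ih =>
    have h1 := ih (fun x hx => hR (Finset.mem_insert_of_mem hx))
      (fun x hx => h x (Finset.mem_insert_of_mem hx))
    rw [Finset.union_insert]
    by_cases hfS : f ∈ S
    · rw [Finset.insert_eq_of_mem (Finset.mem_union_left _ hfS), h1]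
    · rw [h f (Finset.mem_insert_self f R), h1]
      intro x hx
      rw [Finset.mem_erase]
      rcases Finset.mem_union.mp hx with hx | hx
      · exact ⟨fun hh => hfS (hh ▸ hx), hS hx⟩
      · exact ⟨fun hh => hf (hh ▸ hx), hR (Finset.mem_insert_of_mem hx)⟩

/-- For a chores instance on `G = (N, M)`, let `M'` be obtained from
`M` by deleting every edge that is a dummy for at least one of its endpoints. Then `G`
has an EFX₋ orientation iff `G' = (N, M')` has an EFX₋ orientation. -/
theorem stmt18 {V : Type*} [DecidableEq V]
    (M M' : Finset (Sym2 V)) (v : V → Finset (Sym2 V) → ℝ)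
    (hvalid : ValidInstance M v)
    (hchores : ∀ (i : V), ∀ e ∈ M, IsChoreFor (v i) M e ∨ IsDummyFor (v i) M e)
    (hM' : ∀ e : Sym2 V, e ∈ M' ↔ e ∈ M ∧ ¬ ∃ i ∈ e, IsDummyFor (v i) M e) :
    (∃ X : V → Finset (Sym2 V),
        IsAllocation M X ∧ IsOrientation X ∧ CondOwnStrict v X) ↔
    (∃ X : V → Finset (Sym2 V),
        IsAllocation M' X ∧ IsOrientation X ∧ CondOwnStrict v X) := by
  have hsub : M' ⊆ M := fun e he => ((hM' e).mp he).1
  have mono : ∀ (i : V) (S T : Finset (Sym2 V)), S ⊆ T → T ⊆ M → v i T ≤ v i S :=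
    fun i => aux_mono M (v i) (hchores i)
  obtain ⟨hdiag, -, hinc⟩ := hvalid
  constructor
  · rintro ⟨X, ⟨hXM, hXu⟩, hO, hE⟩
    refine ⟨fun i => X i ∩ M', ⟨fun i => Finset.inter_subset_right, ?_⟩, ?_, ?_⟩
    · intro e he
      obtain ⟨i, hi, hu⟩ := hXu e (hsub he)
      exact ⟨i, Finset.mem_inter.mpr ⟨hi, he⟩, fun j hj => hu j (Finset.mem_inter.mp hj).1⟩
    · intro i e he
      exact hO i e (Finset.mem_inter.mp he).1
    · intro i j _ e he _
      obtain ⟨heX, heM'⟩ := Finset.mem_inter.mp he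
      have hie := hO i e heX
      have heM := hsub heM'
      have hch : IsChoreFor (v i) M e := by
        rcases hchores i e heM with h | h
        · exact h
        · exact absurd ⟨i, hie, h⟩ ((hM' e).mp heM').2
      obtain ⟨k, rfl⟩ := Sym2.mem_iff_exists.mp hie
      have hik : i ≠ k := fun h => hdiag _ heM (by simp [h])
      have hk : v i (X k) = v i ∅ := by
        have := aux_dummy M (v i) ∅ (X k) (by simp) (hXM k) (by
          intro f hf
          apply hinc i f (hXM k hf)
          intro hif
          have hkf := hO k f hf
          have : f = s(i, k) := ((Sym2.mem_and_mem_iff hik).mp ⟨hif, hkf⟩)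
          subst this
          exact hik ((hXu _ heM).unique heX hf))
        simpa using this
      have hlt : v i (X i) < v i ((X i).erase s(i, k)) := by
        have := hch ((X i).erase s(i, k)) (Finset.erase_subset_erase _ (hXM i))
        rwa [Finset.insert_erase heX] at this
      have hle : v i ((X i).erase s(i, k)) ≤ v i ∅ :=
        mono i _ _ (by simp) ((Finset.erase_subset _ _).trans (hXM i))
      have h1 := hE i k (by unfold Envies; rw [hk]; linarith) _ heX hlt
      have h2 : v i ((X i).erase s(i, k)) ≤ v i ((X i ∩ M').erase s(i, k)) :=
        mono i _ _ (Finset.erase_subset_erase _ Finset.inter_subset_left)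
          ((Finset.erase_subset _ _).trans (hXM i))
      have h3 : v i (X j ∩ M') ≤ v i ∅ :=
        mono i _ _ (by simp) (Finset.inter_subset_left.trans (hXM j))
      show v i (X j ∩ M') ≤ v i ((X i ∩ M').erase s(i, k))
      linarith
  · rintro ⟨X, ⟨hXM, hXu⟩, hO, hE⟩
    have hf : ∀ e : Sym2 V, ∃ i : V, (∃ i ∈ e, IsDummyFor (v i) M e) →
        i ∈ e ∧ IsDummyFor (v i) M e := by
      intro e
      by_cases h : ∃ i ∈ e, IsDummyFor (v i) M e
      · obtain ⟨i, hi⟩ := h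
        exact ⟨i, fun _ => hi⟩
      · exact ⟨(Quot.out e).1, fun h' => absurd h' h⟩
    choose f hf using hf
    have hD : ∀ e ∈ M, e ∉ M' → f e ∈ e ∧ IsDummyFor (v (f e)) M e := by
      intro e he hne
      apply hf
      by_contra h
      exact hne ((hM' e).mpr ⟨he, h⟩)
    let D : V → Finset (Sym2 V) := fun i => M.filter (fun e => e ∉ M' ∧ f e = i)
    have hDm : ∀ i e, e ∈ D i ↔ e ∈ M ∧ e ∉ M' ∧ f e = i := by
      intro i e
      simp [D]
    have hDM : ∀ i, D i ⊆ M := fun i e he => ((hDm i e).mp he).1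
    have hDd : ∀ i, ∀ e ∈ D i, i ∈ e ∧ IsDummyFor (v i) M e := by
      intro i e he
      obtain ⟨h1, h2, rfl⟩ := (hDm i e).mp he
      exact hD e h1 h2
    have hXM2 : ∀ i, X i ⊆ M := fun i => (hXM i).trans hsub
    have hUM : ∀ i, X i ∪ D i ⊆ M := fun i => Finset.union_subset (hXM2 i) (hDM i)
    refine ⟨fun i => X i ∪ D i, ⟨hUM, ?_⟩, ?_, ?_⟩
    · intro e he
      by_cases heM' : e ∈ M'
      · obtain ⟨i, hi, hu⟩ := hXu e heM'
        refine ⟨i, Finset.mem_union_left _ hi, fun j hj => ?_⟩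
        rcases Finset.mem_union.mp hj with hj | hj
        · exact hu j hj
        · exact absurd heM' ((hDm j e).mp hj).2.1
      · refine ⟨f e, Finset.mem_union_right _ ((hDm _ _).mpr ⟨he, heM', rfl⟩), fun j hj => ?_⟩
        rcases Finset.mem_union.mp hj with hj | hj
        · exact absurd (hXM j hj) heM'
        · exact ((hDm j e).mp hj).2.2.symm
    · intro i e he
      rcases Finset.mem_union.mp he with he | he
      · exact hO i e he
      · exact (hDd i e he).1
    · intro i j hij e he hlt
      change v i (X i ∪ D i) < v i (X j ∪ D j) at hij
      change e ∈ X i ∪ D i at he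
      change v i (X i ∪ D i) < v i ((X i ∪ D i).erase e) at hlt
      change v i (X j ∪ D j) ≤ v i ((X i ∪ D i).erase e)
      have hown := aux_dummy M (v i) (X i) (D i) (hXM2 i) (hDM i) (fun e he => (hDd i e he).2)
      have hj : v i (X j ∪ D j) ≤ v i (X j) := mono i _ _ Finset.subset_union_left (hUM j)
      have heD : e ∉ D i := by
        intro heD
        have := (hDd i e heD).2 ((X i ∪ D i).erase e) (Finset.erase_subset_erase _ (hUM i))
        rw [Finset.insert_erase he] at this
        linarith
      have heX : e ∈ X i := (Finset.mem_union.mp he).resolve_right heD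
      have her : (X i ∪ D i).erase e = (X i).erase e ∪ D i := by
        rw [Finset.erase_union_distrib, Finset.erase_eq_of_notMem heD]
      have hown2 := aux_dummy M (v i) ((X i).erase e) (D i)
        ((Finset.erase_subset _ _).trans (hXM2 i)) (hDM i) (fun e he => (hDd i e he).2)
      rw [her, hown2] at hlt ⊢
      rw [hown] at hlt hij
      exact hj.trans (hE i j (lt_of_lt_of_le hij hj) e heX hlt)
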